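/- Let σ > 0, γ ≥ 2 and 0 ≤ s < τ. Assume each X_i is divergence-free and δ-homogeneous of degree one. Let F : [s,τ]×ℝ^d → ℝ be continuous and bounded. Let u : [s,τ]×ℝ^d → ℝ be continuous with u(t,·) ∈ C²(ℝ^d) for each t, with ∂_t u existing on (s,τ)×ℝ^d and u, X_i u, X_i X_j u, ∂_t u continuous in (t,x) and u, X_i u, X_i X_j u bounded on [s,τ]×ℝ^d, satisfying the Hamilton–Jacobi equation ∂_t u − σ Δ_G u + |∇_G u|^γ = F pointwise on (s,τ)×ℝ^d. Let μ : [s,τ]×ℝ^d → [0,∞) be continuous with μ(t,·) ∈ C²(ℝ^d) for each t, with ∂_t μ existing on (s,τ)×ℝ^d and μ, X_iμ, X_iX_jμ, ∂_tμ continuous in (t,x), with sup over t ∈ [s,τ] of ∫_{ℝ^d} (μ(t,x) + |∇_G μ(t,x)|) dx finite, and satisfying the Fokker–Planck equation −∂_t μ − σ Δ_G μ − div_G(γ |∇_G u|^{γ−2} ∇_G u · μ) = 0 pointwise on (s,τ)×ℝ^d. Then the duality identity holds: ∫_{ℝ^d} u(τ,x) μ(τ,x) dx = ∫_{ℝ^d}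 u(s,x) μ(s,x) dx + ∫_s^τ ∫_{ℝ^d} (γ−1) |∇_G u(t,x)|^γ μ(t,x) dx dt + ∫_s^τ ∫_{ℝ^d} F(t,x) μ(t,x) dx dt. -/

import Mathlib

open MeasureTheory Set

noncomputable section

/-- Derivative of `f : ℝ^d → ℝ` along the vector field `X` (horizontal derivative `X f`). -/
def vderiv {d : ℕ} (X : (Fin d → ℝ) → (Fin d → ℝ)) (f : (Fin d → ℝ) → ℝ)
    (x : Fin d → ℝ) : ℝ := fderiv ℝ f x (X x)

/-- Squared Euclidean norm of the horizontal gradient `∇_G f`. -/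
def hgradSq {d m : ℕ} (X : Fin m → (Fin d → ℝ) → (Fin d → ℝ)) (f : (Fin d → ℝ) → ℝ)
    (x : Fin d → ℝ) : ℝ := ∑ i, (vderiv (X i) f x) ^ 2

/-- Horizontal Laplacian `Δ_G f = Σ X_i (X_i f)`. -/
def hLap {d m : ℕ} (X : Fin m → (Fin d → ℝ) → (Fin d → ℝ)) (f : (Fin d → ℝ) → ℝ)
    (x : Fin d → ℝ) : ℝ := ∑ i, vderiv (X i) (vderiv (X i) f) x

/-- Horizontal divergence `div_G B = Σ X_i B_i`. -/
def hdiv {d m : ℕ} (X : Fin m → (Fin d → ℝ) → (Fin d → ℝ)) (B : (Fin d → ℝ) → Fin m → ℝ)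
    (x : Fin d → ℝ) : ℝ := ∑ i, vderiv (X i) (fun y => B y i) x

/-- Euclidean divergence `Σ_j ∂_{x_j} X^j` of a vector field on `ℝ^d`. -/
def ediv {d : ℕ} (X : (Fin d → ℝ) → (Fin d → ℝ)) (x : Fin d → ℝ) : ℝ :=
  ∑ j, fderiv ℝ X x (Pi.single j 1) j

/-- Anisotropic dilations `δ_λ x = (λ^{w_1} x_1, …, λ^{w_d} x_d)`. -/
def dil {d : ℕ} (w : Fin d → ℕ) (l : ℝ) (x : Fin d → ℝ) : Fin d → ℝ :=
  fun i => l ^ (w i) * x i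

/-- A vector field is `δ`-homogeneous of degree one. -/
def homogOne {d : ℕ} (w : Fin d → ℕ) (X : (Fin d → ℝ) → (Fin d → ℝ)) : Prop :=
  ∀ l : ℝ, 0 < l → ∀ x, fderiv ℝ (dil w l) x (X x) = l • X (dil w l x)


open Filter Topology

lemma contDiff_norm_rpow_mul_coord {m : ℕ} (i : Fin m) {a : ℝ} (ha : 0 ≤ a) :
    ContDiff ℝ 1 (fun p : EuclideanSpace ℝ (Fin m) => ‖p‖ ^ a * p i) := by
  rcases ha.eq_or_lt with rfl | ha
  · simp only [Real.rpow_zero, one_mul]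
    exact (EuclideanSpace.proj (𝕜 := ℝ) i).contDiff
  set L : EuclideanSpace ℝ (Fin m) →L[ℝ] ℝ := EuclideanSpace.proj i with hL
  have hLi : ∀ p : EuclideanSpace ℝ (Fin m), p i = L p := fun p => rfl
  have hLn : ∀ p : EuclideanSpace ℝ (Fin m), |L p| ≤ ‖p‖ := fun p => by
    have := PiLp.norm_apply_le p i
    rw [Real.norm_eq_abs] at this
    exact this
  simp only [hLi]
  set D : EuclideanSpace ℝ (Fin m) → (EuclideanSpace ℝ (Fin m) →L[ℝ] ℝ) := fun p =>
    ‖p‖ ^ a • L + (L p) • ((a * ‖p‖ ^ (a - 2)) • innerSL ℝ p) with hD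
  have hD0 : D 0 = 0 := by simp [hD, ha.ne']
  have hder : ∀ p, HasFDerivAt (fun p : EuclideanSpace ℝ (Fin m) => ‖p‖ ^ a * L p) (D p) p := by
    intro p
    by_cases hp : p = 0
    · subst hp
      rw [hD0]
      refine .of_isLittleO ?_
      simp only [map_zero, mul_zero, sub_zero, zero_apply]
      have h1 : (fun x : EuclideanSpace ℝ (Fin m) => ‖x‖ ^ a) =o[𝓝 0]
          (fun _ => (1:ℝ)) := by
        refine (Asymptotics.isLittleO_const_iff (by simp)).mpr ?_
        have := (continuousAt_id (x := (0 : EuclideanSpace ℝ (Fin m)))).norm.rpow_const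
          (p := a) (.inr ha.le) |>.tendsto
        simpa [ha.ne'] using this
      have h2 : (fun x : EuclideanSpace ℝ (Fin m) => L x) =O[𝓝 0] (fun x => x) :=
        L.isBigO_id _
      have h3 := h1.mul_isBigO h2.norm_right
      simp only [one_mul] at h3
      exact h3.of_norm_right
    · have h1 : HasFDerivAt (fun x : EuclideanSpace ℝ (Fin m) => ‖x‖ ^ a)
          ((a * ‖p‖ ^ (a - 2)) • innerSL ℝ p) p := by
        apply HasStrictFDerivAt.hasFDerivAt
        convert! (hasStrictFDerivAt_norm_sq p).rpow_const (p := a / 2) (by simp [hp]) using 0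
        simp_rw [← Real.rpow_natCast_mul (norm_nonneg _), ← Nat.cast_smul_eq_nsmul ℝ, smul_smul]
        ring_nf
      exact h1.mul L.hasFDerivAt
  rw [contDiff_one_iff_fderiv]
  refine ⟨fun p => (hder p).differentiableAt, ?_⟩
  have : fderiv ℝ (fun p : EuclideanSpace ℝ (Fin m) => ‖p‖ ^ a * L p) = D :=
    funext fun p => (hder p).fderiv
  rw [this, continuous_iff_continuousAt]
  intro p
  by_cases hp : p = 0
  · subst hp
    have hb : ∀ p, ‖D p‖ ≤ ‖p‖ ^ a * (‖L‖ + a) := by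
      intro p
      by_cases hp : p = 0
      · subst hp; rw [hD0]; simp [ha.ne']
      have hp' : 0 < ‖p‖ := norm_pos_iff.2 hp
      calc ‖D p‖ ≤ ‖‖p‖ ^ a • L‖ + ‖(L p) • ((a * ‖p‖ ^ (a - 2)) • innerSL ℝ p)‖ := norm_add_le _ _
        _ = ‖p‖ ^ a * ‖L‖ + |L p| * (a * ‖p‖ ^ (a - 2) * ‖p‖) := by
          rw [norm_smul, norm_smul, norm_smul, innerSL_apply_norm, Real.norm_of_nonneg (by positivity),
            Real.norm_of_nonneg (r := a * ‖p‖ ^ (a - 2)) (by positivity), Real.norm_eq_abs]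
        _ ≤ ‖p‖ ^ a * ‖L‖ + ‖p‖ * (a * ‖p‖ ^ (a - 2) * ‖p‖) := by
          gcongr; exact hLn p
        _ = ‖p‖ ^ a * (‖L‖ + a) := by
          rw [Real.rpow_sub hp', Real.rpow_two]; field_simp
    rw [ContinuousAt, hD0]
    refine squeeze_zero_norm hb ?_
    have := ((continuousAt_id (x := (0 : EuclideanSpace ℝ (Fin m)))).norm.rpow_const
          (p := a) (.inr ha.le)).mul_const (‖L‖ + a) |>.tendsto
    simpa [ha.ne'] using this
  · have h1 : ∀ b : ℝ, ContinuousAt (fun p : EuclideanSpace ℝ (Fin m) => ‖p‖ ^ b) p := fun b =>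
      continuousAt_id.norm.rpow_const (.inl (by simpa using hp))
    exact ((h1 a).smul continuousAt_const).add (L.continuous.continuousAt.smul
      ((continuousAt_const.mul (h1 _)).smul (innerSL ℝ).continuous.continuousAt))

lemma contDiff_vderiv {d : ℕ} {X : (Fin d → ℝ) → (Fin d → ℝ)} (hX : ContDiff ℝ (⊤ : ℕ∞) X)
    {f : (Fin d → ℝ) → ℝ} (hf : ContDiff ℝ 2 f) : ContDiff ℝ 1 (vderiv X f) := by
  unfold vderiv
  exact (hf.fderiv_right (m := 1) (by norm_num)).clm_apply
    (hX.of_le (by exact_mod_cast le_top))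

lemma continuous_vderiv {d : ℕ} {X : (Fin d → ℝ) → (Fin d → ℝ)} (hX : ContDiff ℝ (⊤ : ℕ∞) X)
    {f : (Fin d → ℝ) → ℝ} (hf : ContDiff ℝ 1 f) : Continuous (vderiv X f) := by
  unfold vderiv
  exact (hf.continuous_fderiv (by norm_num)).clm_apply hX.continuous

lemma contDiff_flux {d m : ℕ} {X : Fin m → (Fin d → ℝ) → (Fin d → ℝ)}
    (hX : ∀ i, ContDiff ℝ (⊤ : ℕ∞) (X i))
    {f : (Fin d → ℝ) → ℝ} (hf : ContDiff ℝ 2 f) {a : ℝ} (ha : 0 ≤ a) (i : Fin m) :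
    ContDiff ℝ 1 (fun y => Real.sqrt (hgradSq X f y) ^ a * vderiv (X i) f y) := by
  have h1 : ContDiff ℝ 1 (fun y => (WithLp.toLp 2 (fun j => vderiv (X j) f y) :
      EuclideanSpace ℝ (Fin m))) := by
    rw [contDiff_euclidean]
    intro j
    exact contDiff_vderiv (hX j) hf
  have := (contDiff_norm_rpow_mul_coord i ha).comp h1
  convert this using 2 with y
  simp [hgradSq, EuclideanSpace.norm_eq]

lemma vderiv_hasCompactSupport {d : ℕ} {X : (Fin d → ℝ) → (Fin d → ℝ)}
    {f : (Fin d → ℝ) → ℝ} (hf : HasCompactSupport f) : HasCompactSupport (vderiv X f) := by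
  refine (hf.fderiv (𝕜 := ℝ)).mono' ?_
  refine subset_trans ?_ subset_closure
  intro x hx
  simp only [Function.mem_support, vderiv] at hx ⊢
  intro h; rw [h] at hx; simp at hx

lemma integral_vderiv_eq_zero {d : ℕ} {X : (Fin d → ℝ) → (Fin d → ℝ)}
    (hX : ContDiff ℝ (⊤ : ℕ∞) X) (hdiv : ∀ x, ediv X x = 0)
    {f : (Fin d → ℝ) → ℝ} (hf : ContDiff ℝ 1 f) (hc : HasCompactSupport f) :
    ∫ x, vderiv X f x = 0 := by
  have hX1 : ContDiff ℝ 1 X := hX.of_le (by exact_mod_cast le_top)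
  have hXd : Differentiable ℝ X := hX1.differentiable (by norm_num)
  have hfd : Differentiable ℝ f := hf.differentiable (by norm_num)
  have hXj : ∀ j x v, fderiv ℝ (fun y => X y j) x v = fderiv ℝ X x v j := by
    intro j x v
    have := ((hasFDerivAt_pi'.1 (hXd x).hasFDerivAt) j).fderiv
    rw [this]; rfl
  have hcf : ∀ j, HasCompactSupport (fun x => fderiv ℝ f x (Pi.single j 1)) := fun j =>
    vderiv_hasCompactSupport (X := fun _ => Pi.single j 1) hc
  have hcontf : ∀ j : Fin d, Continuous (fun x => fderiv ℝ f x (Pi.single j 1)) := fun j =>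
    (hf.continuous_fderiv (by norm_num)).clm_apply continuous_const
  have hcontX : ∀ j : Fin d, Continuous (fun x => fderiv ℝ (fun y => X y j) x (Pi.single j 1)) :=
    fun j => by
      simp only [hXj]
      exact (continuous_apply j).comp ((hX1.continuous_fderiv (by norm_num)).clm_apply continuous_const)
  have hXc : ∀ j, Continuous (fun x => X x j) := fun j => (continuous_apply j).comp hX.continuous
  have i1 : ∀ j : Fin d, Integrable (fun x => X x j * fderiv ℝ f x (Pi.single j 1)) := fun j =>
    ((hXc j).mul (hcontf j)).integrable_of_hasCompactSupport (hcf j).mul_left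
  have i2 : ∀ j : Fin d, Integrable (fun x => fderiv ℝ (fun y => X y j) x (Pi.single j 1) * f x) :=
    fun j => ((hcontX j).mul hf.continuous).integrable_of_hasCompactSupport hc.mul_left
  have i3 : ∀ j : Fin d, Integrable (fun x => X x j * f x) :=
    fun j => ((hXc j).mul hf.continuous).integrable_of_hasCompactSupport hc.mul_left
  have e1 : ∀ x, vderiv X f x = ∑ j, X x j * fderiv ℝ f x (Pi.single j 1) := by
    intro x
    unfold vderiv
    conv_lhs => rw [pi_eq_sum_univ' (X x), map_sum]
    simp only [map_smul, smul_eq_mul]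
  simp only [e1]
  rw [integral_finsetSum _ (fun j _ => i1 j)]
  have e2 : ∀ j : Fin d, ∫ x, X x j * fderiv ℝ f x (Pi.single j 1) =
      - ∫ x, fderiv ℝ (fun y => X y j) x (Pi.single j 1) * f x := fun j =>
    integral_mul_fderiv_eq_neg_fderiv_mul_of_integrable (i2 j) (i1 j) (i3 j)
      (fun x _ => ((differentiable_pi.1 hXd) j) x) (fun x _ => hfd x)
  simp only [e2]
  rw [Finset.sum_neg_distrib, ← integral_finsetSum _ (fun j _ => i2 j)]
  have : ∀ x, ∑ j : Fin d, fderiv ℝ (fun y => X y j) x (Pi.single j 1) * f x = 0 := by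
    intro x
    rw [← Finset.sum_mul]
    have := hdiv x
    unfold ediv at this
    simp only [hXj, this, zero_mul]
  simp [this]

lemma vderiv_mul' {d : ℕ} (X : (Fin d → ℝ) → (Fin d → ℝ)) {f g : (Fin d → ℝ) → ℝ}
    {x : Fin d → ℝ} (hf : DifferentiableAt ℝ f x) (hg : DifferentiableAt ℝ g x) :
    vderiv X (fun y => f y * g y) x = vderiv X f x * g x + f x * vderiv X g x := by
  unfold vderiv
  rw [fderiv_fun_mul hf hg]
  simp; ring

lemma vderiv_sub' {d : ℕ} (X : (Fin d → ℝ) → (Fin d → ℝ)) {f g : (Fin d → ℝ) → ℝ}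
    {x : Fin d → ℝ} (hf : DifferentiableAt ℝ f x) (hg : DifferentiableAt ℝ g x) :
    vderiv X (fun y => f y - g y) x = vderiv X f x - vderiv X g x := by
  unfold vderiv
  rw [fderiv_fun_sub hf hg]
  simp

lemma vderiv_const_mul' {d : ℕ} (X : (Fin d → ℝ) → (Fin d → ℝ)) {f : (Fin d → ℝ) → ℝ} (c : ℝ)
    {x : Fin d → ℝ} (hf : DifferentiableAt ℝ f x) :
    vderiv X (fun y => c * f y) x = c * vderiv X f x := by
  unfold vderiv
  rw [fderiv_const_mul hf]
  simp

/-- The flux terms multiplied by the derivative of the cutoff. -/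
def fluxZ {d m : ℕ} (X : Fin m → (Fin d → ℝ) → (Fin d → ℝ)) (σ γ : ℝ)
    (v μ : (Fin d → ℝ) → ℝ) (i : Fin m) (x : Fin d → ℝ) : ℝ :=
  v x * (γ * Real.sqrt (hgradSq X v x) ^ (γ - 2) * vderiv (X i) v x * μ x)
    - σ * (μ x * vderiv (X i) v x - v x * vderiv (X i) μ x)

lemma hgradSq_nonneg {d m : ℕ} (X : Fin m → (Fin d → ℝ) → (Fin d → ℝ)) (v : (Fin d → ℝ) → ℝ)
    (x : Fin d → ℝ) : 0 ≤ hgradSq X v x := Finset.sum_nonneg fun _ _ => sq_nonneg _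

lemma sqrt_rpow_mul_sq {γ S : ℝ} (hγ : 2 ≤ γ) (hS : 0 ≤ S) :
    Real.sqrt S ^ (γ - 2) * S = Real.sqrt S ^ γ := by
  conv_lhs => rw [← Real.sq_sqrt hS, Real.sqrt_sq (Real.sqrt_nonneg S)]
  rw [← Real.rpow_two, ← Real.rpow_add' (Real.sqrt_nonneg S) (by linarith)]
  congr 1; ring

lemma continuous_hgradSq {d m : ℕ} {X : Fin m → (Fin d → ℝ) → (Fin d → ℝ)}
    (hX : ∀ i, ContDiff ℝ (⊤ : ℕ∞) (X i)) {v : (Fin d → ℝ) → ℝ} (hv : ContDiff ℝ 1 v) :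
    Continuous (hgradSq X v) := by
  unfold hgradSq
  exact continuous_finsetSum _ fun i _ => (continuous_vderiv (hX i) hv).pow 2

lemma spatial_identity {d m : ℕ} {X : Fin m → (Fin d → ℝ) → (Fin d → ℝ)}
    (hX : ∀ i, ContDiff ℝ (⊤ : ℕ∞) (X i)) (hXdiv : ∀ i x, ediv (X i) x = 0)
    {σ γ : ℝ} (hγ : 2 ≤ γ) {v μ η : (Fin d → ℝ) → ℝ} (hv : ContDiff ℝ 2 v) (hμ : ContDiff ℝ 2 μ)
    (hη : ContDiff ℝ 1 η) (hc : HasCompactSupport η) {F : (Fin d → ℝ) → ℝ} (hF : Continuous F)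
    {vt μt : (Fin d → ℝ) → ℝ}
    (hHJ : ∀ x, vt x - σ * hLap X v x + Real.sqrt (hgradSq X v x) ^ γ = F x)
    (hFP : ∀ x, - μt x - σ * hLap X μ x
          - hdiv X (fun y i => γ * Real.sqrt (hgradSq X v y) ^ (γ - 2)
              * vderiv (X i) v y * μ y) x = 0) :
    ∫ x, η x * (vt x * μ x + v x * μt x) =
      (∫ x, η x * ((γ - 1) * Real.sqrt (hgradSq X v x) ^ γ * μ x)) + (∫ x, η x * (F x * μ x))
        + ∑ i, ∫ x, vderiv (X i) η x * fluxZ X σ γ v μ i x := by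
  have hv1 : ContDiff ℝ 1 v := hv.of_le (by norm_num)
  have hμ1 : ContDiff ℝ 1 μ := hμ.of_le (by norm_num)
  set B : Fin m → (Fin d → ℝ) → ℝ := fun i y =>
    γ * Real.sqrt (hgradSq X v y) ^ (γ - 2) * vderiv (X i) v y * μ y with hB
  have hB1 : ∀ i, ContDiff ℝ 1 (B i) := by
    intro i
    have := ((contDiff_flux hX hv (a := γ - 2) (by linarith) i).const_smul γ).mul hμ1
    have e : B i = fun y => γ • (Real.sqrt (hgradSq X v y) ^ (γ - 2) * vderiv (X i) v y) * μ y := by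
      funext y; simp only [hB, smul_eq_mul]; ring
    rw [e]; exact this
  have hXv : ∀ i, ContDiff ℝ 1 (vderiv (X i) v) := fun i => contDiff_vderiv (hX i) hv
  have hXμ : ∀ i, ContDiff ℝ 1 (vderiv (X i) μ) := fun i => contDiff_vderiv (hX i) hμ
  set W : Fin m → (Fin d → ℝ) → ℝ := fun i y =>
    σ * (μ y * vderiv (X i) v y - v y * vderiv (X i) μ y) - v y * B i y with hW
  have hW1 : ∀ i, ContDiff ℝ 1 (W i) := fun i =>
    (contDiff_const.mul ((hμ1.mul (hXv i)).sub (hv1.mul (hXμ i)))).sub (hv1.mul (hB1 i))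
  have hWZ : ∀ i x, fluxZ X σ γ v μ i x = - W i x := by
    intro i x; simp only [fluxZ, hW, hB]; ring
  have hzero : ∀ i, ∫ x, vderiv (X i) (fun y => η y * W i y) x = 0 := fun i =>
    integral_vderiv_eq_zero (hX i) (hXdiv i) (hη.mul (hW1 i)) hc.mul_right
  have hcontS : Continuous (fun x => Real.sqrt (hgradSq X v x) ^ γ) :=
    ((continuous_hgradSq hX hv1).sqrt).rpow_const (fun _ => .inr (by linarith))
  have dd : ∀ {f : (Fin d → ℝ) → ℝ}, ContDiff ℝ 1 f → ∀ x, DifferentiableAt ℝ f x :=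
    fun hf x => hf.differentiable (by norm_num) x
  have hWder : ∀ i x, vderiv (X i) (W i) x =
      σ * (μ x * vderiv (X i) (vderiv (X i) v) x - v x * vderiv (X i) (vderiv (X i) μ) x)
        - vderiv (X i) v x * B i x - v x * vderiv (X i) (B i) x := by
    intro i x
    rw [hW]
    simp only
    rw [vderiv_sub' _ (dd (contDiff_const.mul ((hμ1.mul (hXv i)).sub (hv1.mul (hXμ i)))) x)
      (dd (hv1.mul (hB1 i)) x),
      vderiv_const_mul' _ _ (dd ((hμ1.mul (hXv i)).sub (hv1.mul (hXμ i))) x),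
      vderiv_sub' _ (dd (hμ1.mul (hXv i)) x) (dd (hv1.mul (hXμ i)) x),
      vderiv_mul' _ (dd hμ1 x) (dd (hXv i) x), vderiv_mul' _ (dd hv1 x) (dd (hXμ i) x),
      vderiv_mul' _ (dd hv1 x) (dd (hB1 i) x)]
    ring
  have hsumB : ∀ x, ∑ i, vderiv (X i) v x * B i x = γ * Real.sqrt (hgradSq X v x) ^ γ * μ x := by
    intro x
    rw [← sqrt_rpow_mul_sq hγ (hgradSq_nonneg X v x)]
    have : ∀ i, vderiv (X i) v x * B i x =
      (γ * Real.sqrt (hgradSq X v x) ^ (γ - 2) * μ x) * (vderiv (X i) v x) ^ 2 := by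
      intro i; simp only [hB]; ring
    simp only [this]
    rw [← Finset.mul_sum, ← hgradSq]
    ring
  have i1 : Integrable (fun x => η x * ((γ - 1) * Real.sqrt (hgradSq X v x) ^ γ * μ x)) :=
    (hη.continuous.mul ((continuous_const.mul hcontS).mul hμ.continuous)).integrable_of_hasCompactSupport
      hc.mul_right
  have i2 : Integrable (fun x => η x * (F x * μ x)) :=
    (hη.continuous.mul (hF.mul hμ.continuous)).integrable_of_hasCompactSupport hc.mul_right
  have i3 : ∀ i, Integrable (fun x => vderiv (X i) η x * fluxZ X σ γ v μ i x) := fun i => by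
    simp only [hWZ]
    exact ((continuous_vderiv (hX i) hη).mul (hW1 i).continuous.neg).integrable_of_hasCompactSupport
      (vderiv_hasCompactSupport hc).mul_right
  have i4 : ∀ i, Integrable (vderiv (X i) (fun y => η y * W i y)) := fun i =>
    (continuous_vderiv (hX i) (hη.mul (hW1 i))).integrable_of_hasCompactSupport
      (vderiv_hasCompactSupport hc.mul_right)
  have key : ∀ x, η x * (vt x * μ x + v x * μt x) =
      η x * ((γ - 1) * Real.sqrt (hgradSq X v x) ^ γ * μ x) + η x * (F x * μ x)
        + ∑ i, vderiv (X i) η x * fluxZ X σ γ v μ i x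
        + ∑ i, vderiv (X i) (fun y => η y * W i y) x := by
    intro x
    have e1 : vt x = F x + σ * hLap X v x - Real.sqrt (hgradSq X v x) ^ γ := by
      linarith [hHJ x]
    have e2 : μt x = - σ * hLap X μ x - ∑ i, vderiv (X i) (B i) x := by
      have := hFP x
      unfold hdiv at this
      linarith
    have e3 : ∑ i, vderiv (X i) (fun y => η y * W i y) x =
        - (∑ i, vderiv (X i) η x * fluxZ X σ γ v μ i x)
        + η x * (σ * (μ x * hLap X v x - v x * hLap X μ x)
          - γ * Real.sqrt (hgradSq X v x) ^ γ * μ x - v x * ∑ i, vderiv (X i) (B i) x) := by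
      rw [← hsumB]
      simp only [hLap, mul_sub, Finset.mul_sum, ← Finset.sum_sub_distrib, ← Finset.sum_neg_distrib,
        ← Finset.sum_add_distrib]
      refine Finset.sum_congr rfl fun i _ => ?_
      rw [vderiv_mul' _ (dd hη x) (dd (hW1 i) x), hWder, hWZ]
      ring
    rw [e3, e1, e2]
    ring
  simp only [key]
  rw [integral_add, integral_add, integral_add i1 i2, integral_finsetSum _ (fun i _ => i3 i),
    integral_finsetSum _ (fun i _ => i4 i)]
  · simp [hzero]
  · exact i1.add i2
  · exact integrable_finsetSum _ (fun i _ => i3 i)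
  · exact (i1.add i2).add (integrable_finsetSum _ (fun i _ => i3 i))
  · exact integrable_finsetSum _ (fun i _ => i4 i)

lemma continuousOn_cutoff_integral {d : ℕ} {S : Set ℝ} {η : (Fin d → ℝ) → ℝ}
    (hη : Continuous η) (hc : HasCompactSupport η) {G : ℝ → (Fin d → ℝ) → ℝ}
    (hG : ContinuousOn (fun p : ℝ × (Fin d → ℝ) => G p.1 p.2) (S ×ˢ univ)) :
    ContinuousOn (fun t => ∫ x, η x * G t x) S := by
  refine continuousOn_integral_of_compact_support (k := tsupport η) hc ?_ ?_
  · exact (hη.comp continuous_snd).continuousOn.mul hG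
  · intro t x _ hx
    rw [image_eq_zero_of_notMem_tsupport hx, zero_mul]

lemma section_continuous {d : ℕ} {S : Set ℝ} {G : ℝ → (Fin d → ℝ) → ℝ}
    (hG : ContinuousOn (fun p : ℝ × (Fin d → ℝ) => G p.1 p.2) (S ×ˢ univ)) {t : ℝ} (ht : t ∈ S) :
    Continuous (G t) := by
  have : ContinuousOn (fun x : Fin d → ℝ => G t x) univ :=
    hG.comp (f := fun x : Fin d → ℝ => (t, x)) (by fun_prop) (fun x _ => ⟨ht, mem_univ _⟩)
  exact continuousOn_univ.1 this

lemma hasDerivAt_cutoff_integral {d : ℕ} {s τ : ℝ} {η : (Fin d → ℝ) → ℝ}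
    (hη : Continuous η) (hc : HasCompactSupport η) {G G' : ℝ → (Fin d → ℝ) → ℝ}
    (hG : ContinuousOn (fun p : ℝ × (Fin d → ℝ) => G p.1 p.2) (Icc s τ ×ˢ univ))
    (hG' : ContinuousOn (fun p : ℝ × (Fin d → ℝ) => G' p.1 p.2) (Ioo s τ ×ˢ univ))
    (hd : ∀ t ∈ Ioo s τ, ∀ x, HasDerivAt (fun r => G r x) (G' t x) t) {t : ℝ} (ht : t ∈ Ioo s τ) :
    HasDerivAt (fun t => ∫ x, η x * G t x) (∫ x, η x * G' t x) t := by
  obtain ⟨ε, hε, hsub⟩ := Metric.nhds_basis_closedBall.mem_iff.1 (isOpen_Ioo.mem_nhds ht)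
  have hK : IsCompact (Metric.closedBall t ε ×ˢ tsupport η) :=
    (isCompact_closedBall t ε).prod hc
  have hcon : ContinuousOn (fun p : ℝ × (Fin d → ℝ) => η p.2 * G' p.1 p.2)
      (Metric.closedBall t ε ×ˢ tsupport η) :=
    ((hη.comp continuous_snd).continuousOn.mul hG').mono
      (prod_mono hsub (subset_univ _))
  obtain ⟨C, hC⟩ := hK.exists_bound_of_continuousOn hcon
  have hIcc : ∀ r ∈ Metric.closedBall t ε, r ∈ Icc s τ := fun r hr => Ioo_subset_Icc_self (hsub hr)
  have hcs : ∀ r ∈ Metric.closedBall t ε, Continuous (fun x => η x * G r x) := fun r hr =>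
    hη.mul (section_continuous hG (hIcc r hr))
  refine (hasDerivAt_integral_of_dominated_loc_of_deriv_le
    (F := fun t x => η x * G t x) (F' := fun t x => η x * G' t x)
    (bound := (tsupport η).indicator fun _ => C) (Metric.closedBall_mem_nhds t hε) ?_ ?_ ?_ ?_ ?_ ?_).2
  · filter_upwards [Metric.closedBall_mem_nhds t hε] with r hr
    exact (hcs r hr).aestronglyMeasurable
  · exact (hcs t (Metric.mem_closedBall_self hε.le)).integrable_of_hasCompactSupport hc.mul_right
  · exact (hη.mul (section_continuous hG' ht)).aestronglyMeasurable
  · refine Eventually.of_forall fun x r hr => ?_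
    by_cases hx : x ∈ tsupport η
    · rw [indicator_of_mem hx]
      exact hC (r, x) ⟨hr, hx⟩
    · rw [indicator_of_notMem hx, image_eq_zero_of_notMem_tsupport hx]; simp
  · exact (integrable_indicator_iff (isClosed_tsupport η).measurableSet).2
      (integrableOn_const hc.measure_ne_top)
  · exact Eventually.of_forall fun x r hr => (hd r (hsub hr) x).const_mul _

lemma limit_lemma {d : ℕ} {s τ : ℝ} {η : ℕ → (Fin d → ℝ) → ℝ}
    (hη : ∀ n, Continuous (η n)) (hc : ∀ n, HasCompactSupport (η n))
    (h1 : ∀ n x, |η n x| ≤ 1) (hlim : ∀ x, Tendsto (fun n => η n x) atTop (𝓝 1))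
    {P : ℝ → (Fin d → ℝ) → ℝ} (hP : ∀ t ∈ Icc s τ, Integrable (P t)) {M K : ℝ}
    (hPM : ∀ t ∈ Icc s τ, ∫ x, P t x ≤ M) (hK : 0 ≤ K)
    {G : ℝ → (Fin d → ℝ) → ℝ}
    (hG : ContinuousOn (fun p : ℝ × (Fin d → ℝ) => G p.1 p.2) (Icc s τ ×ˢ univ))
    (hb : ∀ t ∈ Icc s τ, ∀ x, |G t x| ≤ K * P t x) :
    (∀ t ∈ Icc s τ, Tendsto (fun n => ∫ x, η n x * G t x) atTop (𝓝 (∫ x, G t x))) ∧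
    Tendsto (fun n => ∫ t in Ioc s τ, ∫ x, η n x * G t x) atTop
      (𝓝 (∫ t in Ioc s τ, ∫ x, G t x)) := by
  have hbn : ∀ n, ∀ t ∈ Icc s τ, ∀ x, ‖η n x * G t x‖ ≤ K * P t x := by
    intro n t ht x
    rw [Real.norm_eq_abs, abs_mul]
    exact (mul_le_of_le_one_left (abs_nonneg _) (h1 n x)).trans (hb t ht x)
  have hA : ∀ t ∈ Icc s τ, Tendsto (fun n => ∫ x, η n x * G t x) atTop (𝓝 (∫ x, G t x)) := by
    intro t ht
    refine tendsto_integral_of_dominated_convergence (fun x => K * P t x)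
      (fun n => ((hη n).mul (section_continuous hG ht)).aestronglyMeasurable)
      ((hP t ht).const_mul K) (fun n => Eventually.of_forall (hbn n t ht))
      (Eventually.of_forall fun x => ?_)
    simpa using (hlim x).mul_const (G t x)
  refine ⟨hA, ?_⟩
  refine tendsto_integral_of_dominated_convergence (fun _ => K * M) (fun n => ?_) ?_ (fun n => ?_) ?_
  · exact ((continuousOn_cutoff_integral (hη n) (hc n) hG).mono
      Ioc_subset_Icc_self).aestronglyMeasurable measurableSet_Ioc
  · exact integrable_const _
  · refine (ae_restrict_iff' measurableSet_Ioc).2 (Eventually.of_forall fun t ht => ?_)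
    have ht := Ioc_subset_Icc_self ht
    refine (norm_integral_le_of_norm_le ((hP t ht).const_mul K)
      (Eventually.of_forall (hbn n t ht))).trans ?_
    rw [integral_const_mul]
    exact mul_le_mul_of_nonneg_left (hPM t ht) hK
  · exact (ae_restrict_iff' measurableSet_Ioc).2
      (Eventually.of_forall fun t ht => hA t (Ioc_subset_Icc_self ht))

lemma error_lemma {d : ℕ} {s τ : ℝ} {ξ : ℕ → (Fin d → ℝ) → ℝ} {c : ℕ → ℝ}
    (h1 : ∀ n x, |ξ n x| ≤ c n) (hlim : Tendsto c atTop (𝓝 0))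
    {P : ℝ → (Fin d → ℝ) → ℝ} (hP : ∀ t ∈ Icc s τ, Integrable (P t)) {M K : ℝ}
    (hPM : ∀ t ∈ Icc s τ, ∫ x, P t x ≤ M) (hK : 0 ≤ K)
    {G : ℝ → (Fin d → ℝ) → ℝ} 
    (hb : ∀ t ∈ Icc s τ, ∀ x, |G t x| ≤ K * P t x) :
    Tendsto (fun n => ∫ t in Ioc s τ, ∫ x, ξ n x * G t x) atTop (𝓝 0) := by
  have hc0 : ∀ n, 0 ≤ c n := fun n => (abs_nonneg _).trans (h1 n 0)
  have hb2 : ∀ n, ∀ t ∈ Ioc s τ, ‖∫ x, ξ n x * G t x‖ ≤ c n * (K * M) := by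
    intro n t ht
    have ht := Ioc_subset_Icc_self ht
    refine (norm_integral_le_of_norm_le (((hP t ht).const_mul K).const_mul (c n))
      (Eventually.of_forall fun x => ?_)).trans ?_
    · rw [Real.norm_eq_abs, abs_mul]
      exact mul_le_mul (h1 n x) (hb t ht x) (abs_nonneg _) (hc0 n)
    rw [integral_const_mul, integral_const_mul]
    exact mul_le_mul_of_nonneg_left (mul_le_mul_of_nonneg_left (hPM t ht) hK) (hc0 n)
  refine squeeze_zero_norm (fun n => norm_setIntegral_le_of_norm_le_const
    measure_Ioc_lt_top (hb2 n)) ?_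
  simpa using (hlim.mul_const (K * M)).mul_const (volume.real (Ioc s τ))

lemma vderiv_dil {d : ℕ} {w : Fin d → ℕ} {X : (Fin d → ℝ) → (Fin d → ℝ)} (hX : homogOne w X)
    {η : (Fin d → ℝ) → ℝ} (hη : Differentiable ℝ η) {l : ℝ} (hl : 0 < l) (x : Fin d → ℝ) :
    vderiv X (fun y => η (dil w l y)) x = l * vderiv X η (dil w l x) := by
  have hd : DifferentiableAt ℝ (dil w l) x := by unfold dil; fun_prop
  unfold vderiv
  have := fderiv_comp x (hη (dil w l x)) hd
  rw [show (fun y => η (dil w l y)) = η ∘ dil w l from rfl, this]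
  simp [hX l hl x]

lemma exists_cutoff {d m : ℕ} {w : Fin d → ℕ} (hw : ∀ i, 0 < w i)
    {X : Fin m → (Fin d → ℝ) → (Fin d → ℝ)} (hXsm : ∀ i, ContDiff ℝ (⊤ : ℕ∞) (X i))
    (hX : ∀ i, homogOne w (X i)) :
    ∃ (η : ℕ → (Fin d → ℝ) → ℝ) (c : Fin m → ℕ → ℝ), (∀ n, ContDiff ℝ 1 (η n)) ∧
      (∀ n, HasCompactSupport (η n)) ∧ (∀ n x, |η n x| ≤ 1) ∧
      (∀ x, Tendsto (fun n => η n x) atTop (𝓝 1)) ∧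
      (∀ i n x, |vderiv (X i) (η n) x| ≤ c i n) ∧ (∀ i, Tendsto (c i) atTop (𝓝 0)) := by
  let b : ContDiffBump (0 : Fin d → ℝ) := ⟨1, 2, by norm_num, by norm_num⟩
  have hb1 : ContDiff ℝ 1 b := b.contDiff
  have hbc : HasCompactSupport b := b.hasCompactSupport
  have hbd : ∀ i, ∃ C, ∀ x, ‖vderiv (X i) b x‖ ≤ C := fun i =>
    (vderiv_hasCompactSupport hbc).exists_bound_of_continuous (continuous_vderiv (hXsm i) hb1)
  choose C hC using hbd
  let l : ℕ → ℝ := fun n => 1 / ((n : ℝ) + 1)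
  have hl : ∀ n, 0 < l n := fun n => by positivity
  have hl0 : Tendsto l atTop (𝓝 0) := tendsto_one_div_add_atTop_nhds_zero_nat
  refine ⟨fun n x => b (dil w (l n) x), fun i n => l n * C i, ?_, ?_, ?_, ?_, ?_, ?_⟩
  · intro n
    refine hb1.comp ?_
    unfold dil
    fun_prop
  · intro n
    let h : (Fin d → ℝ) ≃ₜ (Fin d → ℝ) :=
      Homeomorph.piCongrRight (fun i => Homeomorph.mulLeft₀ (l n ^ w i) (pow_pos (hl n) _).ne')
    exact hbc.comp_homeomorph h
  · intro n x
    rw [abs_of_nonneg b.nonneg]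
    exact b.le_one
  · intro x
    have h1 : Tendsto (fun n => dil w (l n) x) atTop (𝓝 0) := by
      rw [tendsto_pi_nhds]
      intro i
      have := (hl0.pow (w i)).mul_const (x i)
      simpa [dil, (hw i).ne'] using this
    have h2 : b 0 = 1 := b.one_of_mem_closedBall (by simp [b])
    rw [← h2]
    exact (b.continuous.tendsto 0).comp h1
  · intro i n x
    rw [vderiv_dil (hX i) (hb1.differentiable (by norm_num)) (hl n), abs_mul, abs_of_pos (hl n)]
    exact mul_le_mul_of_nonneg_left (hC i _) (hl n).le
  · intro i
    simpa using hl0.mul_const (C i)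

/-- Duality identity between the Hamilton–Jacobi equation
`∂_t u − σ Δ_G u + |∇_G u|^γ = F` and the adjoint Fokker–Planck equation
`−∂_t μ − σ Δ_G μ − div_G(γ |∇_G u|^{γ−2} ∇_G u μ) = 0`:
`∫ u(τ) μ(τ) = ∫ u(s) μ(s) + ∫∫ (γ−1)|∇_G u|^γ μ + ∫∫ F μ`. -/
theorem hamiltonJacobi_fokkerPlanck_duality {d m : ℕ} (hd : 0 < d) (hm : 0 < m)
    (w : Fin d → ℕ) (hw : ∀ i, 0 < w i)
    (X : Fin m → (Fin d → ℝ) → (Fin d → ℝ)) (hXsm : ∀ i, ContDiff ℝ (⊤ : ℕ∞) (X i))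
    (hXdivfree : ∀ i x, ediv (X i) x = 0)
    (hXhom : ∀ i, homogOne w (X i))
    (σ γ s τ : ℝ) (hσ : 0 < σ) (hγ : 2 ≤ γ) (hs : 0 ≤ s) (hsτ : s < τ)
    (F : ℝ → (Fin d → ℝ) → ℝ) (MF : ℝ)
    (hFcont : ContinuousOn (fun p : ℝ × (Fin d → ℝ) => F p.1 p.2) (Set.Icc s τ ×ˢ Set.univ))
    (hFbd : ∀ t ∈ Set.Icc s τ, ∀ x, |F t x| ≤ MF)
    -- regularity and boundedness of u
    (u : ℝ → (Fin d → ℝ) → ℝ)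
    (hucont : ContinuousOn (fun p : ℝ × (Fin d → ℝ) => u p.1 p.2) (Set.Icc s τ ×ˢ Set.univ))
    (hux : ∀ t ∈ Set.Icc s τ, ContDiff ℝ 2 (u t))
    (hut : ∀ (x : Fin d → ℝ), ∀ t ∈ Set.Ioo s τ, DifferentiableAt ℝ (fun r => u r x) t)
    (huxcont : ∀ i, ContinuousOn (fun p : ℝ × (Fin d → ℝ) => vderiv (X i) (u p.1) p.2)
        (Set.Icc s τ ×ˢ Set.univ))
    (huxxcont : ∀ i i', ContinuousOn
        (fun p : ℝ × (Fin d → ℝ) => vderiv (X i) (vderiv (X i') (u p.1)) p.2)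
        (Set.Icc s τ ×ˢ Set.univ))
    (hutcont : ContinuousOn (fun p : ℝ × (Fin d → ℝ) => deriv (fun r => u r p.2) p.1)
        (Set.Ioo s τ ×ˢ Set.univ))
    (Mu : ℝ)
    (hubd : ∀ t ∈ Set.Icc s τ, ∀ x, |u t x| ≤ Mu ∧ (∀ i, |vderiv (X i) (u t) x| ≤ Mu) ∧
        (∀ i i', |vderiv (X i) (vderiv (X i') (u t)) x| ≤ Mu))
    -- u solves the Hamilton–Jacobi equation
    (hHJ : ∀ t ∈ Set.Ioo s τ, ∀ x,
        deriv (fun r => u r x) t - σ * hLap X (u t) x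
          + Real.sqrt (hgradSq X (u t) x) ^ γ = F t x)
    -- regularity, positivity and integrability of μ
    (μ : ℝ → (Fin d → ℝ) → ℝ) (hμpos : ∀ t x, 0 ≤ μ t x)
    (hμcont : ContinuousOn (fun p : ℝ × (Fin d → ℝ) => μ p.1 p.2) (Set.Icc s τ ×ˢ Set.univ))
    (hμx : ∀ t ∈ Set.Icc s τ, ContDiff ℝ 2 (μ t))
    (hμt : ∀ (x : Fin d → ℝ), ∀ t ∈ Set.Ioo s τ, DifferentiableAt ℝ (fun r => μ r x) t)
    (hμxcont : ∀ i, ContinuousOn (fun p : ℝ × (Fin d → ℝ) => vderiv (X i) (μ p.1) p.2)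
        (Set.Icc s τ ×ˢ Set.univ))
    (hμxxcont : ∀ i i', ContinuousOn
        (fun p : ℝ × (Fin d → ℝ) => vderiv (X i) (vderiv (X i') (μ p.1)) p.2)
        (Set.Icc s τ ×ˢ Set.univ))
    (hμtcont : ContinuousOn (fun p : ℝ × (Fin d → ℝ) => deriv (fun r => μ r p.2) p.1)
        (Set.Ioo s τ ×ˢ Set.univ))
    (hμint : ∀ t ∈ Set.Icc s τ, MeasureTheory.Integrable
        (fun x : Fin d → ℝ => μ t x + Real.sqrt (hgradSq X (μ t) x)))
    (Mμ : ℝ) (hμsup : ∀ t ∈ Set.Icc s τ,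
        (∫ x : Fin d → ℝ, (μ t x + Real.sqrt (hgradSq X (μ t) x))) ≤ Mμ)
    -- μ solves the adjoint Fokker–Planck equation
    (hFP : ∀ t ∈ Set.Ioo s τ, ∀ x,
        -deriv (fun r => μ r x) t - σ * hLap X (μ t) x
          - hdiv X (fun y i => γ * Real.sqrt (hgradSq X (u t) y) ^ (γ - 2)
              * vderiv (X i) (u t) y * μ t y) x = 0) :
    (∫ x : Fin d → ℝ, u τ x * μ τ x)
      = (∫ x : Fin d → ℝ, u s x * μ s x)
        + (∫ t in Set.Ioc s τ, ∫ x : Fin d → ℝ,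
            (γ - 1) * Real.sqrt (hgradSq X (u t) x) ^ γ * μ t x)
        + (∫ t in Set.Ioc s τ, ∫ x : Fin d → ℝ, F t x * μ t x) := by
  classical
  obtain ⟨η, c, hη1, hηc, hη01, hηlim, hηd, hc0⟩ := exists_cutoff hw hXsm hXhom
  have hsI : s ∈ Icc s τ := left_mem_Icc.2 hsτ.le
  have hτI : τ ∈ Icc s τ := right_mem_Icc.2 hsτ.le
  have hMu : 0 ≤ Mu := (abs_nonneg _).trans (hubd s hsI 0).1
  have hMF : 0 ≤ MF := (abs_nonneg _).trans (hFbd s hsI 0)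
  set P : ℝ → (Fin d → ℝ) → ℝ := fun t x => μ t x + Real.sqrt (hgradSq X (μ t) x) with hP
  have hμP : ∀ t x, μ t x ≤ P t x := fun t x => le_add_of_nonneg_right (Real.sqrt_nonneg _)
  have hXμ : ∀ i t x, |vderiv (X i) (μ t) x| ≤ Real.sqrt (hgradSq X (μ t) x) := by
    intro i t x
    refine Real.abs_le_sqrt ?_
    exact Finset.single_le_sum (f := fun i => (vderiv (X i) (μ t) x) ^ 2)
      (fun j _ => sq_nonneg _) (Finset.mem_univ i)
  set N : ℝ := Real.sqrt (m * Mu ^ 2) with hN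
  have hN0 : 0 ≤ N := Real.sqrt_nonneg _
  have hSN : ∀ t ∈ Icc s τ, ∀ x, Real.sqrt (hgradSq X (u t) x) ≤ N := by
    intro t ht x
    refine Real.sqrt_le_sqrt ?_
    unfold hgradSq
    refine (Finset.sum_le_card_nsmul _ _ (Mu ^ 2) fun i _ => ?_).trans (by simp)
    rw [← sq_abs]
    exact pow_le_pow_left₀ (abs_nonneg _) ((hubd t ht x).2.1 i) 2
  have hgc : ContinuousOn (fun p : ℝ × (Fin d → ℝ) => Real.sqrt (hgradSq X (u p.1) p.2))
      (Icc s τ ×ˢ univ) := by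
    refine ContinuousOn.sqrt ?_
    unfold hgradSq
    exact continuousOn_finsetSum _ fun i _ => (huxcont i).pow 2
  have hgpow : ∀ a : ℝ, 0 ≤ a → ContinuousOn
      (fun p : ℝ × (Fin d → ℝ) => Real.sqrt (hgradSq X (u p.1) p.2) ^ a) (Icc s τ ×ˢ univ) :=
    fun a ha => hgc.rpow_const (fun _ _ => .inr ha)
  -- the integrands
  set G0 : ℝ → (Fin d → ℝ) → ℝ := fun t x => u t x * μ t x with hG0
  set G1 : ℝ → (Fin d → ℝ) → ℝ := fun t x =>
    (γ - 1) * Real.sqrt (hgradSq X (u t) x) ^ γ * μ t x with hG1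
  set G2 : ℝ → (Fin d → ℝ) → ℝ := fun t x => F t x * μ t x with hG2
  set Z : Fin m → ℝ → (Fin d → ℝ) → ℝ := fun i t x => fluxZ X σ γ (u t) (μ t) i x with hZ
  have cG0 : ContinuousOn (fun p : ℝ × (Fin d → ℝ) => G0 p.1 p.2) (Icc s τ ×ˢ univ) :=
    hucont.mul hμcont
  have cG1 : ContinuousOn (fun p : ℝ × (Fin d → ℝ) => G1 p.1 p.2) (Icc s τ ×ˢ univ) :=
    (continuousOn_const.mul (hgpow γ (by linarith))).mul hμcont
  have cG2 : ContinuousOn (fun p : ℝ × (Fin d → ℝ) => G2 p.1 p.2) (Icc s τ ×ˢ univ) :=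
    hFcont.mul hμcont
  have cZ : ∀ i, ContinuousOn (fun p : ℝ × (Fin d → ℝ) => Z i p.1 p.2) (Icc s τ ×ˢ univ) := by
    intro i
    simp only [hZ, fluxZ]
    exact (hucont.mul (((continuousOn_const.mul (hgpow (γ - 2) (by linarith))).mul
      (huxcont i)).mul hμcont)).sub (continuousOn_const.mul ((hμcont.mul (huxcont i)).sub
        (hucont.mul (hμxcont i))))
  -- bounds
  have bG0 : ∀ t ∈ Icc s τ, ∀ x, |G0 t x| ≤ Mu * P t x := by
    intro t ht x
    simp only [hG0, abs_mul, abs_of_nonneg (hμpos t x)]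
    exact mul_le_mul (hubd t ht x).1 (hμP t x) (hμpos t x) hMu
  have bG1 : ∀ t ∈ Icc s τ, ∀ x, |G1 t x| ≤ ((γ - 1) * N ^ γ) * P t x := by
    intro t ht x
    have h0 : 0 ≤ (γ - 1) * Real.sqrt (hgradSq X (u t) x) ^ γ :=
      mul_nonneg (by linarith) (Real.rpow_nonneg (Real.sqrt_nonneg _) _)
    simp only [hG1]
    rw [abs_mul, abs_of_nonneg (hμpos t x), abs_of_nonneg h0]
    refine mul_le_mul ?_ (hμP t x) (hμpos t x) (mul_nonneg (by linarith) (Real.rpow_nonneg hN0 _))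
    exact mul_le_mul_of_nonneg_left (Real.rpow_le_rpow (Real.sqrt_nonneg _) (hSN t ht x)
      (by linarith)) (by linarith)
  have bG2 : ∀ t ∈ Icc s τ, ∀ x, |G2 t x| ≤ MF * P t x := by
    intro t ht x
    simp only [hG2, abs_mul, abs_of_nonneg (hμpos t x)]
    exact mul_le_mul (hFbd t ht x) (hμP t x) (hμpos t x) hMF
  have hK3 : 0 ≤ Mu * (γ * N ^ (γ - 2) * Mu) + σ * Mu := by
    have := Real.rpow_nonneg hN0 (γ - 2)
    have : 0 ≤ γ := by linarith
    positivity
  have bZ : ∀ i, ∀ t ∈ Icc s τ, ∀ x, |Z i t x| ≤ (Mu * (γ * N ^ (γ - 2) * Mu) + σ * Mu) * P t x := by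
    intro i t ht x
    obtain ⟨b1, b2, -⟩ := hubd t ht x
    have b2 := b2 i
    have b3 : Real.sqrt (hgradSq X (u t) x) ^ (γ - 2) ≤ N ^ (γ - 2) :=
      Real.rpow_le_rpow (Real.sqrt_nonneg _) (hSN t ht x) (by linarith)
    have b4 := Real.rpow_nonneg (Real.sqrt_nonneg (hgradSq X (u t) x)) (γ - 2)
    have hμ0 := hμpos t x
    have hγ0 : 0 ≤ γ := by linarith
    have hP0 : 0 ≤ P t x := hμ0.trans (hμP t x)
    have b5 := hXμ i t x
    have hN2 := Real.rpow_nonneg hN0 (γ - 2)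
    simp only [hZ, fluxZ]
    refine (abs_sub _ _).trans ?_
    have q1 : |u t x * (γ * Real.sqrt (hgradSq X (u t) x) ^ (γ - 2) * vderiv (X i) (u t) x * μ t x)|
        ≤ Mu * (γ * N ^ (γ - 2) * Mu) * P t x := by
      rw [abs_mul, abs_mul, abs_mul, abs_mul, abs_of_nonneg hγ0, abs_of_nonneg b4,
        abs_of_nonneg hμ0, mul_assoc Mu]
      gcongr
      exact hμP t x
    have q2 : |σ * (μ t x * vderiv (X i) (u t) x - u t x * vderiv (X i) (μ t) x)|
        ≤ σ * Mu * P t x := by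
      rw [abs_mul, abs_of_pos hσ, mul_assoc]
      refine mul_le_mul_of_nonneg_left ?_ hσ.le
      refine (abs_sub _ _).trans ?_
      rw [abs_mul, abs_mul, abs_of_nonneg hμ0]
      simp only [hP]
      have r1 : μ t x * |vderiv (X i) (u t) x| ≤ μ t x * Mu := mul_le_mul_of_nonneg_left b2 hμ0
      have r2 : |u t x| * |vderiv (X i) (μ t) x| ≤ Mu * Real.sqrt (hgradSq X (μ t) x) :=
        mul_le_mul b1 b5 (abs_nonneg _) hMu
      linarith
    linarith
  -- identity for a fixed cutoff
  have hid : ∀ n, (∫ x, η n x * G0 τ x) - (∫ x, η n x * G0 s x) =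
      (∫ t in Ioc s τ, ∫ x, η n x * G1 t x) + (∫ t in Ioc s τ, ∫ x, η n x * G2 t x)
        + ∑ i, ∫ t in Ioc s τ, ∫ x, vderiv (X i) (η n) x * Z i t x := by
    intro n
    have k1 := continuousOn_cutoff_integral (hη1 n).continuous (hηc n) cG1
    have k2 := continuousOn_cutoff_integral (hη1 n).continuous (hηc n) cG2
    have k3 : ∀ i, ContinuousOn (fun t => ∫ x, vderiv (X i) (η n) x * Z i t x) (Icc s τ) := fun i =>
      continuousOn_cutoff_integral (continuous_vderiv (hXsm i) (hη1 n))
        (vderiv_hasCompactSupport (hηc n)) (cZ i)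
    have toI : ∀ {f : ℝ → ℝ}, ContinuousOn f (Icc s τ) → IntegrableOn f (Ioc s τ) := fun hf =>
      (hf.integrableOn_Icc).mono_set Ioc_subset_Icc_self
    have hFTC := intervalIntegral.integral_eq_sub_of_hasDerivAt_of_le hsτ.le
      (f := fun t => ∫ x, η n x * G0 t x)
      (f' := fun t => (∫ x, η n x * G1 t x) + (∫ x, η n x * G2 t x)
        + ∑ i, ∫ x, vderiv (X i) (η n) x * Z i t x)
      (continuousOn_cutoff_integral (hη1 n).continuous (hηc n) cG0) ?_ ?_
    · rw [← hFTC, intervalIntegral.integral_of_le hsτ.le, integral_add, integral_add,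
        integral_finsetSum]
      · exact fun i _ => toI (k3 i)
      · exact toI k1
      · exact toI k2
      · exact toI (k1.add k2)
      · exact integrable_finsetSum _ fun i _ => toI (k3 i)
    · intro t ht
      have htI := Ioo_subset_Icc_self ht
      have hsub : Ioo s τ ×ˢ (univ : Set (Fin d → ℝ)) ⊆ Icc s τ ×ˢ univ :=
        prod_mono Ioo_subset_Icc_self subset_rfl
      have hd := hasDerivAt_cutoff_integral (hη1 n).continuous (hηc n) (G := G0)
        (G' := fun t x => deriv (fun r => u r x) t * μ t x + u t x * deriv (fun r => μ r x) t)
        cG0 ((hutcont.mul (hμcont.mono hsub)).add ((hucont.mono hsub).mul hμtcont))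
        (fun r hr x => (hut x r hr).hasDerivAt.mul (hμt x r hr).hasDerivAt) ht
      have hsp := spatial_identity hXsm hXdivfree (σ := σ) hγ (hux t htI) (hμx t htI) (hη1 n)
        (hηc n) (section_continuous hFcont htI) (vt := fun x => deriv (fun r => u r x) t)
        (μt := fun x => deriv (fun r => μ r x) t) (hHJ t ht) (hFP t ht)
      rw [hsp] at hd
      exact hd
    · rw [intervalIntegrable_iff_integrableOn_Ioc_of_le hsτ.le]
      exact toI ((k1.add k2).add (continuousOn_finsetSum _ fun i _ => k3 i))
  -- pass to the limit
  have hηcont := fun n => (hη1 n).continuous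
  have L0 := (limit_lemma hηcont hηc hη01 hηlim hμint hμsup hMu cG0 bG0).1
  have L1 := (limit_lemma hηcont hηc hη01 hηlim hμint hμsup
    (mul_nonneg (by linarith) (Real.rpow_nonneg hN0 _)) cG1 bG1).2
  have L2 := (limit_lemma hηcont hηc hη01 hηlim hμint hμsup hMF cG2 bG2).2
  have L3 : Tendsto (fun n => ∑ i, ∫ t in Ioc s τ, ∫ x, vderiv (X i) (η n) x * Z i t x)
      atTop (𝓝 0) := by
    have := tendsto_finsetSum (Finset.univ : Finset (Fin m)) (fun i _ =>
      error_lemma (hηd i) (hc0 i) hμint hμsup hK3 (bZ i))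
    simpa using this
  have LL := (L0 τ hτI).sub (L0 s hsI)
  have LR := (L1.add L2).add L3
  have := tendsto_nhds_unique (LL.congr hid) LR
  linarith
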